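/- Let d ≥ 2 and let (Y_v), indexed by the non-root vertices of the rooted Cayley tree of order d, be independent real-valued random variables with E[Y_v] = 0 and E[Y_v²] ≤ C < ∞ for all v. Suppose there is a function ψ⋆ : ℝ → [0, 1] with |E[exp(i s Y_v)]| ≤ ψ⋆(s) for every v and every s ∈ ℝ, and constants c̄ > 0 and δ > 0 with ψ⋆(s) ≤ exp(−c̄ s²) for all |s| ≤ δ. Then the almost-sure limit H of the spherical averages H_r exists, and with c := min( c̄/((d+1)(d−1)), c̄δ/(d(d−1)) ) > 0 one has |E[exp(itH)]| ≤ exp( −c · min(t², |t|) ) for all t ∈ ℝ; consequently the law of H is absolutely continuous with respect to Lebesgue measure and admits a bounded, infinitely differentiable density. -/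

import Mathlib

open MeasureTheory ProbabilityTheory Filter Finset Topology

noncomputable section

/-- A non-root vertex of the rooted Cayley tree of order `d`: the first step from the
root is one of `d+1` children, every further step one of `d` children. -/
abbrev Vertex (d : ℕ) : Type := Fin (d + 1) × List (Fin d)

/-- depth of a non-root vertex -/
def vdepth {d : ℕ} (v : Vertex d) : ℕ := v.2.length + 1

/-- the sphere `W_r` of radius `r ≥ 1`: all vertices of depth `r` -/
def sphereW (d r : ℕ) : Finset (Vertex d) :=
  (Finset.univ : Finset (Fin (d + 1) × (Fin (r - 1) → Fin d))).image
    (fun x => (x.1, List.ofFn x.2))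

/-- height at `v`: sum of the increments along the path from the root to `v`
(the prefixes of length `0,…,|v.2|` of the step list of `v` enumerate that path). -/
def heightAt {d : ℕ} {Ω : Type*} (Y : Vertex d → Ω → ℝ) (v : Vertex d) (ω : Ω) : ℝ :=
  ∑ k ∈ Finset.range (v.2.length + 1), Y (v.1, v.2.take k) ω

/-- spherical average `H_r` of the heights at depth `r` -/
def sphAvg (d : ℕ) {Ω : Type*} (Y : Vertex d → Ω → ℝ) (r : ℕ) (ω : Ω) : ℝ :=
  (((d + 1) * d ^ (r - 1) : ℕ) : ℝ)⁻¹ * ∑ v ∈ sphereW d r, heightAt Y v ω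

section FourierInversion

open scoped FourierTransform


/-- Pairing a law on the line with a Schwartz function, in terms of the Fourier transform of its
characteristic function. -/
theorem integral_schwartz_eq_integral_mul_fourier_charFun (μ : Measure ℝ) [IsProbabilityMeasure μ]
    (hφ : Integrable (fun ξ : ℝ => charFun μ (2 * Real.pi * ξ))) (g : SchwartzMap ℝ ℂ) :
    ∫ x, g x ∂μ = ∫ x, 𝓕 (fun ξ : ℝ => charFun μ (2 * Real.pi * ξ)) x * g x := by
  have hq (ξ : ℝ) : VectorFourier.fourierIntegral Real.fourierChar μ (innerₗ ℝ) 1 ξ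
      = charFun μ (2 * Real.pi * (-ξ)) := by
    rw [charFun_eq_fourierIntegral']
    congr 1
    simp only [smul_eq_mul]
    field_simp [Real.pi_ne_zero]
  have h1 := VectorFourier.integral_fourierIntegral_smul_eq_flip (μ := μ) (ν := volume)
    (L := innerₗ ℝ) (f := (1 : ℝ → ℂ)) (g := fun ξ => (𝓕⁻ g) ξ) Real.continuous_fourierChar
    continuous_inner (integrable_const 1) (𝓕⁻ g).integrable
  have h2 := VectorFourier.integral_fourierIntegral_smul_eq_flip (μ := volume) (ν := volume)
    (L := innerₗ ℝ) (f := fun ξ : ℝ => charFun μ (2 * Real.pi * ξ)) (g := g)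
    Real.continuous_fourierChar continuous_inner hφ g.integrable
  have h3 : VectorFourier.fourierIntegral Real.fourierChar volume (innerₗ ℝ).flip
      (fun ξ => (𝓕⁻ g) ξ) = g := by
    rw [flip_innerₗ]
    have h : 𝓕 (𝓕⁻ g : SchwartzMap ℝ ℂ) = g := FourierTransform.fourier_fourierInv_eq g
    exact congrArg (fun h : SchwartzMap ℝ ℂ => (h : ℝ → ℂ)) h
  have h4 (x : ℝ) : VectorFourier.fourierIntegral Real.fourierChar volume (innerₗ ℝ).flip g (-x)
      = (𝓕⁻ g) x := by
    rw [flip_innerₗ, SchwartzMap.fourierInv_coe, Real.fourierInv_eq_fourier_neg]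
    rfl
  simp only [hq, h3, Pi.one_apply, smul_eq_mul, one_mul] at h1
  rw [← h1, ← integral_neg_eq_self]
  simp only [neg_neg, ← h4]
  exact h2.symm

/-- A law whose characteristic function is integrable against all powers has a bounded smooth
density. -/
theorem exists_contDiff_density_of_integrable_charFun (μ : Measure ℝ) [IsProbabilityMeasure μ]
    (hφ : ∀ n : ℕ, Integrable (fun t : ℝ => |t| ^ n * ‖charFun μ t‖)) :
    ∃ f : ℝ → ℝ, ContDiff ℝ (⊤ : ℕ∞) f ∧ (∃ M : ℝ, ∀ x, |f x| ≤ M) ∧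
      μ = volume.withDensity (fun x => ENNReal.ofReal (f x)) := by
  have hpi : (0 : ℝ) < 2 * Real.pi := by positivity
  set q : ℝ → ℂ := fun ξ => charFun μ (2 * Real.pi * ξ) with hqdef
  have hqn (n : ℕ) : Integrable (fun ξ : ℝ => ‖ξ‖ ^ n * ‖q ξ‖) := by
    have := ((hφ n).comp_mul_left' hpi.ne').const_mul ((2 * Real.pi) ^ n)⁻¹
    refine this.congr (ae_of_all _ fun ξ => ?_)
    simp only [abs_mul, mul_pow, abs_of_pos hpi, Real.norm_eq_abs, hqdef]
    field_simp
  have hqi : Integrable q := by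
    have hm : AEStronglyMeasurable q :=
      (measurable_charFun.comp (measurable_const_mul _)).aestronglyMeasurable
    rw [← integrable_norm_iff hm]
    simpa using hqn 0
  have hsm : ContDiff ℝ (⊤ : ℕ∞) (𝓕 q) := Real.contDiff_fourier fun n _ => hqn n
  set f : ℝ → ℝ := fun x => (𝓕 q x).re with hf
  have hfsm : ContDiff ℝ (⊤ : ℕ∞) f := Complex.reCLM.contDiff.comp hsm
  have hfc : Continuous f := hfsm.continuous
  have key (g : ℝ → ℝ) (hg : ContDiff ℝ (⊤ : ℕ∞) g) (hgc : HasCompactSupport g) :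
      ∫ x, g x ∂μ = ∫ x, f x * g x := by
    have hgc' : HasCompactSupport (fun x => (g x : ℂ)) :=
      hgc.comp_left (g := fun y : ℝ => (y : ℂ)) (by simp)
    have hg' : ContDiff ℝ (⊤ : ℕ∞) (fun x => (g x : ℂ)) := Complex.ofRealCLM.contDiff.comp hg
    have h := integral_schwartz_eq_integral_mul_fourier_charFun μ hqi (hgc'.toSchwartzMap hg')
    simp only [HasCompactSupport.toSchwartzMap_toFun] at h
    have hint : Integrable (fun x => 𝓕 q x * (g x : ℂ)) :=
      (hsm.continuous.mul hg'.continuous).integrable_of_hasCompactSupport hgc'.mul_left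
    have h' := congrArg Complex.re h
    rw [integral_complex_ofReal, Complex.ofReal_re] at h'
    rw [h', ← RCLike.re_eq_complex_re, ← integral_re hint]
    simp [hf]
  have hpos (x : ℝ) : 0 ≤ f x := by
    by_contra! hx
    obtain ⟨ε, hε, hball⟩ := Metric.isOpen_iff.1 (isOpen_lt hfc continuous_const) x hx
    let b : ContDiffBump x := ⟨ε / 4, ε / 2, by positivity, by linarith⟩
    have hb := key b b.contDiff b.hasCompactSupport
    have h0 : 0 ≤ ∫ y, b y ∂μ := integral_nonneg fun y => b.nonneg
    have hcont : Continuous (fun y => -(f y * b y)) := (hfc.mul b.continuous).neg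
    have hle : ∀ y, 0 ≤ -(f y * b y) := fun y => by
      by_cases hy : y ∈ Metric.ball x ε
      · have := hball hy
        simp only [Set.mem_ofPred_eq] at this
        have := b.nonneg (x := y)
        nlinarith
      · have : b y = 0 := b.zero_of_le_dist (by
          have : ε ≤ dist y x := by simpa using hy
          change ε / 2 ≤ _
          linarith)
        simp [this]
    have hlt : 0 < ∫ y, -(f y * b y) := by
      refine hcont.integral_pos_of_hasCompactSupport_nonneg_nonzero (x := x)
        (b.hasCompactSupport.mul_left (f := f)).neg hle ?_
      have : b x = 1 := b.one_of_mem_closedBall (Metric.mem_closedBall_self b.rIn_pos.le)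
      simp [this, hx.ne]
    rw [integral_neg] at hlt
    linarith
  refine ⟨f, hfsm, ⟨∫ ξ, ‖q ξ‖, fun x => (Complex.abs_re_le_norm _).trans
    (VectorFourier.norm_fourierIntegral_le_integral_norm _ _ _ _ _)⟩, ?_⟩
  have hIoo (a b : ℝ) : μ (Set.Ioo a b) =
      volume.withDensity (fun x => ENNReal.ofReal (f x)) (Set.Ioo a b) := by
    obtain ⟨g, hgs, hg, hgr⟩ := (isOpen_Ioo (a := a) (b := b)).exists_contDiff_support_eq (n := ⊤)
    have hg01 (x : ℝ) : 0 ≤ g x ∧ g x ≤ 1 := hgr ⟨x, rfl⟩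
    have hgz {x : ℝ} (hx : x ∉ Set.Ioo a b) : g x = 0 := by
      rwa [← hgs, Function.notMem_support] at hx
    let k : ℕ → ℝ → ℝ := fun n x => 1 - (1 - g x) ^ n
    have hkz (n : ℕ) {x : ℝ} (hx : x ∉ Set.Ioo a b) : k n x = 0 := by simp [k, hgz hx]
    have hksm (n : ℕ) : ContDiff ℝ (⊤ : ℕ∞) (k n) :=
      contDiff_const.sub ((contDiff_const.sub hg).pow n)
    have hkc (n : ℕ) : HasCompactSupport (k n) :=
      HasCompactSupport.intro (isCompact_Icc (a := a) (b := b)) fun x hx =>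
        hkz n fun h => hx (Set.Ioo_subset_Icc_self h)
    have hkb (n : ℕ) (x : ℝ) : |k n x| ≤ (Set.Ioo a b).indicator 1 x := by
      by_cases hx : x ∈ Set.Ioo a b
      · have h1 : 0 ≤ (1 - g x) ^ n := pow_nonneg (by linarith [(hg01 x).2]) n
        have h2 : (1 - g x) ^ n ≤ 1 :=
          pow_le_one₀ (by linarith [(hg01 x).2]) (by linarith [(hg01 x).1])
        simp only [hx, Set.indicator_of_mem, Pi.one_apply, k, abs_le]
        constructor <;> linarith
      · simp [hkz n hx, hx]
    have hklim (x : ℝ) :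
        Tendsto (fun n => k n x) atTop (𝓝 ((Set.Ioo a b).indicator 1 x)) := by
      by_cases hx : x ∈ Set.Ioo a b
      · have h0 : 0 < g x := lt_of_le_of_ne (hg01 x).1 (by
          rw [← hgs, Function.mem_support] at hx
          exact hx.symm)
        have := (tendsto_pow_atTop_nhds_zero_of_lt_one (r := 1 - g x)
          (by linarith [(hg01 x).2]) (by linarith)).const_sub 1
        simpa [hx, k] using this
      · simp [hkz _ hx, hx]
    have hL : Tendsto (fun n => ∫ x, k n x ∂μ) atTop
        (𝓝 (∫ x, (Set.Ioo a b).indicator (1 : ℝ → ℝ) x ∂μ)) :=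
      tendsto_integral_of_dominated_convergence _
        (fun n => (hksm n).continuous.aestronglyMeasurable)
        ((integrable_const (1 : ℝ)).indicator measurableSet_Ioo)
        (fun n => ae_of_all _ (hkb n)) (ae_of_all _ hklim)
    have hfi : IntegrableOn f (Set.Ioo a b) :=
      (hfc.continuousOn.integrableOn_Icc).mono_set Set.Ioo_subset_Icc_self
    have hR : Tendsto (fun n => ∫ x, f x * k n x) atTop
        (𝓝 (∫ x, (Set.Ioo a b).indicator f x)) := by
      refine tendsto_integral_of_dominated_convergence ((Set.Ioo a b).indicator f)
        (fun n => (hfc.mul (hksm n).continuous).aestronglyMeasurable)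
        ((integrable_indicator_iff measurableSet_Ioo).2 hfi)
        (fun n => ae_of_all _ fun x => ?_) (ae_of_all _ fun x => ?_)
      · rw [Real.norm_eq_abs, abs_mul, abs_of_nonneg (hpos x)]
        refine (mul_le_mul_of_nonneg_left (hkb n x) (hpos x)).trans_eq ?_
        by_cases hx : x ∈ Set.Ioo a b <;> simp [hx]
      · convert! (hklim x).const_mul (f x) using 2
        by_cases hx : x ∈ Set.Ioo a b <;> simp [hx]
    simp only [key _ (hksm _) (hkc _)] at hL
    have heq := tendsto_nhds_unique hL hR
    rw [integral_indicator_one measurableSet_Ioo, integral_indicator measurableSet_Ioo] at heq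
    rw [withDensity_apply _ measurableSet_Ioo,
      ← ofReal_integral_eq_lintegral_ofReal hfi (ae_of_all _ hpos), ← heq, ofReal_measureReal]
  exact Real.measure_ext_Ioo_rat fun a b => hIoo a b

theorem integrable_abs_pow_mul_exp_neg_mul_abs (n : ℕ) {c : ℝ} (hc : 0 < c) :
    Integrable (fun t : ℝ => |t| ^ n * Real.exp (-c * |t|)) := by
  have h := integrableOn_rpow_mul_exp_neg_mul_rpow (p := 1) (s := n) (b := c)
    (by have : (0 : ℝ) ≤ n := n.cast_nonneg
        linarith) one_pos hc
  simp only [Real.rpow_natCast, Real.rpow_one] at h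
  have hpos : IntegrableOn (fun t : ℝ => |t| ^ n * Real.exp (-c * |t|)) (Set.Ioi 0) :=
    IntegrableOn.congr_fun h (fun t (ht : 0 < t) => by simp [abs_of_pos ht]) measurableSet_Ioi
  have hneg : IntegrableOn (fun t : ℝ => |t| ^ n * Real.exp (-c * |t|)) (Set.Iic 0) := by
    rw [integrableOn_Iic_iff_integrableOn_Iio]
    simpa using hpos.comp_neg
  simpa [IntegrableOn] using hneg.union hpos

end FourierInversion

theorem sphereW_map_injective (d n : ℕ) :
    Function.Injective (fun x : Fin (d + 1) × (Fin n → Fin d) =>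
      ((x.1, List.ofFn x.2) : Vertex d)) := by
  rintro ⟨a, x⟩ ⟨b, y⟩ h
  simp only [Prod.mk.injEq] at h
  exact Prod.ext h.1 (List.ofFn_injective h.2)

theorem sphereW_succ (d n : ℕ) : sphereW d (n + 1) =
    (univ : Finset (Fin (d + 1) × (Fin n → Fin d))).image (fun x => (x.1, List.ofFn x.2)) :=
  rfl

theorem sum_sphereW {d : ℕ} (n : ℕ) (F : Vertex d → ℝ) :
    ∑ v ∈ sphereW d (n + 1), F v =
      ∑ a : Fin (d + 1), ∑ x : Fin n → Fin d, F (a, List.ofFn x) := by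
  rw [sphereW_succ, sum_image (sphereW_map_injective d n).injOn,
    ← Fintype.sum_prod_type' (fun a x => F (a, List.ofFn x))]

theorem card_sphereW (d n : ℕ) : (sphereW d (n + 1)).card = (d + 1) * d ^ n := by
  rw [sphereW_succ, card_image_of_injective _ (sphereW_map_injective d n)]
  simp

theorem length_of_mem_sphereW {d n : ℕ} {v : Vertex d} (hv : v ∈ sphereW d (n + 1)) :
    v.2.length = n := by
  obtain ⟨x, -, rfl⟩ := mem_image.1 hv
  simp

theorem heightAt_concat {d : ℕ} {Ω : Type*} (Y : Vertex d → Ω → ℝ) (a : Fin (d + 1))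
    (l : List (Fin d)) (b : Fin d) (ω : Ω) :
    heightAt Y (a, l ++ [b]) ω = heightAt Y (a, l) ω + Y (a, l ++ [b]) ω := by
  simp only [heightAt, List.length_append, List.length_singleton]
  rw [sum_range_succ]
  congr 1
  · refine sum_congr rfl fun k hk => ?_
    rw [List.take_append_of_le_length (by simpa [Nat.lt_succ_iff] using hk)]
  · rw [List.take_of_length_le (by simp)]

theorem sum_heightAt_sphereW_succ {d : ℕ} {Ω : Type*} (Y : Vertex d → Ω → ℝ) (n : ℕ) (ω : Ω) :
    ∑ v ∈ sphereW d (n + 2), heightAt Y v ω =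
      d * ∑ v ∈ sphereW d (n + 1), heightAt Y v ω + ∑ v ∈ sphereW d (n + 2), Y v ω := by
  rw [sum_sphereW, sum_sphereW, sum_sphereW, mul_sum, ← sum_add_distrib]
  refine sum_congr rfl fun a _ => ?_
  have hsnoc (F : List (Fin d) → ℝ) : ∑ x : Fin (n + 1) → Fin d, F (List.ofFn x) =
      ∑ b : Fin d, ∑ x : Fin n → Fin d, F (List.ofFn x ++ [b]) := by
    rw [← Fintype.sum_prod_type', ← (Fin.snocEquiv (fun _ : Fin (n + 1) => Fin d)).sum_comp]
    refine sum_congr rfl fun p _ => ?_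
    rw [List.ofFn_succ_last]
    simp [Fin.snocEquiv]
  rw [hsnoc (fun l => heightAt Y (a, l) ω), hsnoc (fun l => Y (a, l) ω)]
  simp [heightAt_concat, sum_add_distrib]

/-- The number of vertices at depth `n + 1`. -/
def levelCard (d n : ℕ) : ℝ := ((d : ℝ) + 1) * (d : ℝ) ^ n

/-- The average of the increments over the sphere of radius `n + 1`. -/
def levelAvg (d : ℕ) {Ω : Type*} (Y : Vertex d → Ω → ℝ) (n : ℕ) (ω : Ω) : ℝ :=
  (levelCard d n)⁻¹ * ∑ v ∈ sphereW d (n + 1), Y v ω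

theorem levelCard_pos {d : ℕ} (hd : 0 < d) (n : ℕ) : 0 < levelCard d n := by
  have : (0 : ℝ) < d := by exact_mod_cast hd
  unfold levelCard
  positivity

theorem levelCard_succ (d n : ℕ) : levelCard d (n + 1) = d * levelCard d n := by
  simp only [levelCard, pow_succ]
  ring

theorem card_sphereW_eq_levelCard (d n : ℕ) :
    ((sphereW d (n + 1)).card : ℝ) = levelCard d n := by
  simp [card_sphereW, levelCard]

theorem sphAvg_succ_eq_sum_levelAvg {d : ℕ} (hd : 0 < d) {Ω : Type*} (Y : Vertex d → Ω → ℝ)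
    (n : ℕ) (ω : Ω) : sphAvg d Y (n + 1) ω = ∑ k ∈ range (n + 1), levelAvg d Y k ω := by
  have hw (m : ℕ) : (((d + 1) * d ^ m : ℕ) : ℝ) = levelCard d m := by simp [levelCard]
  induction n with
  | zero =>
    simp only [sphAvg, zero_add, range_one, sum_singleton, levelAvg, Nat.sub_self, hw]
    congr 1
    refine sum_congr rfl fun v hv => ?_
    have hlen : v.2 = [] := List.eq_nil_of_length_eq_zero (length_of_mem_sphereW (n := 0) hv)
    obtain ⟨a, l⟩ := v
    subst hlen
    simp [heightAt]
  | succ n ih =>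
    rw [sum_range_succ, ← ih]
    simp only [sphAvg, levelAvg, Nat.add_sub_cancel, hw]
    rw [show n + 1 + 1 = n + 2 from rfl, sum_heightAt_sphereW_succ, levelCard_succ]
    have h1 := (levelCard_pos hd n).ne'
    have h2 : (d : ℝ) ≠ 0 := by exact_mod_cast hd.ne'
    field_simp

theorem sphAvg_succ_eq_sum_biUnion {d : ℕ} (hd : 0 < d) {Ω : Type*} (Y : Vertex d → Ω → ℝ)
    (n : ℕ) (ω : Ω) : sphAvg d Y (n + 1) ω =
      ∑ v ∈ (range (n + 1)).biUnion (fun k => sphereW d (k + 1)),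
        (levelCard d v.2.length)⁻¹ * Y v ω := by
  rw [sphAvg_succ_eq_sum_levelAvg hd, sum_biUnion]
  · refine sum_congr rfl fun k _ => ?_
    rw [levelAvg, mul_sum]
    exact sum_congr rfl fun v hv => by rw [length_of_mem_sphereW hv]
  · intro i _ j _ hij
    refine Finset.disjoint_left.2 fun v hi hj => hij ?_
    rw [← length_of_mem_sphereW hi, length_of_mem_sphereW hj]

section Probability

variable {Ω : Type*} [MeasurableSpace Ω] {P : Measure Ω} {d : ℕ} {Y : Vertex d → Ω → ℝ}

theorem memLp_levelAvg (hL2 : ∀ v, MemLp (Y v) 2 P) (n : ℕ) : MemLp (levelAvg d Y n) 2 P :=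
  (memLp_finsetSum _ fun v _ => hL2 v).const_mul _

theorem integral_levelAvg_sq_le [IsProbabilityMeasure P] (hd : 0 < d) (hindep : iIndepFun Y P)
    (hL2 : ∀ v, MemLp (Y v) 2 P) (hmean : ∀ v, ∫ ω, Y v ω ∂P = 0)
    {C : ℝ} (hvar : ∀ v, ∫ ω, (Y v ω) ^ 2 ∂P ≤ C) (n : ℕ) :
    ∫ ω, (levelAvg d Y n ω) ^ 2 ∂P ≤ C / levelCard d n := by
  have hm : ∫ ω, (∑ v ∈ sphereW d (n + 1), Y v) ω ∂P = 0 := by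
    simp only [Finset.sum_apply]
    rw [integral_finsetSum _ fun v _ => (hL2 v).integrable (by norm_num)]
    simp [hmean]
  have hs := IndepFun.variance_sum (s := sphereW d (n + 1)) (fun v _ => hL2 v)
    fun i _ j _ hij => hindep.indepFun hij
  rw [variance_of_integral_eq_zero (memLp_finsetSum' _ fun v _ => hL2 v).aemeasurable hm] at hs
  have hb : ∑ v ∈ sphereW d (n + 1), variance (Y v) P ≤ levelCard d n * C := by
    rw [← card_sphereW_eq_levelCard, ← nsmul_eq_mul]
    refine sum_le_card_nsmul _ _ _ fun v _ => ?_
    rw [variance_of_integral_eq_zero (hL2 v).aemeasurable (hmean v)]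
    exact hvar v
  have hpos := levelCard_pos hd n
  simp only [Finset.sum_apply] at hs
  simp only [levelAvg, mul_pow]
  rw [integral_const_mul, hs]
  calc _ ≤ (levelCard d n)⁻¹ ^ 2 * (levelCard d n * C) := by gcongr
    _ = _ := by field_simp

theorem exists_tendsto_sphAvg [IsProbabilityMeasure P] (hd : 2 ≤ d) (hindep : iIndepFun Y P)
    (hL2 : ∀ v, MemLp (Y v) 2 P) (hmean : ∀ v, ∫ ω, Y v ω ∂P = 0)
    {C : ℝ} (hC : 0 ≤ C) (hvar : ∀ v, ∫ ω, (Y v ω) ^ 2 ∂P ≤ C) :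
    ∀ᵐ ω ∂P, ∃ h : ℝ, Tendsto (fun r => sphAvg d Y r ω) atTop (𝓝 h) := by
  have hnorm (n : ℕ) : eLpNorm (levelAvg d Y n) 2 P ≤
      ENNReal.ofReal (√C * √(1 / 2) ^ n) := by
    rw [(memLp_levelAvg hL2 n).eLpNorm_eq_integral_rpow_norm (by norm_num) (by norm_num)]
    refine ENNReal.ofReal_le_ofReal ?_
    have hcard : (2 : ℝ) ^ n ≤ levelCard d n := by
      have hd' : (2 : ℝ) ≤ d := by exact_mod_cast hd
      have : (2 : ℝ) ^ n ≤ (d : ℝ) ^ n := by gcongr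
      unfold levelCard
      nlinarith [pow_pos (two_pos (α := ℝ)) n]
    have h := integral_levelAvg_sq_le (by omega) hindep hL2 hmean hvar n
    have h' : C / levelCard d n ≤ C * (1 / 2) ^ n := by
      rw [one_div, inv_pow, ← div_eq_mul_inv]
      gcongr
    simp only [ENNReal.toReal_ofNat, Real.rpow_ofNat, Real.norm_eq_abs, sq_abs]
    rw [← one_div, ← Real.sqrt_eq_rpow]
    refine (Real.sqrt_le_sqrt (h.trans h')).trans_eq ?_
    have hsqrt : √((1 / 2 : ℝ) ^ n) = √(1 / 2) ^ n := by
      rw [Real.sqrt_eq_iff_mul_self_eq (by positivity) (by positivity), ← mul_pow,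
        Real.mul_self_sqrt (by norm_num)]
    rw [Real.sqrt_mul hC, hsqrt]
  have hsum : Summable fun n : ℕ => √C * √(1 / 2) ^ n :=
    (summable_geometric_of_lt_one (by positivity)
      (by rw [Real.sqrt_lt' one_pos]; norm_num)).mul_left _
  have htop : ∑' n, eLpNorm (levelAvg d Y n) 2 P ≠ ⊤ :=
    ne_top_of_le_ne_top hsum.tsum_ofReal_ne_top (ENNReal.tsum_le_tsum hnorm)
  filter_upwards [summable_norm_of_tsum_eLpNorm_ne_top (by norm_num)
    (fun n => (memLp_levelAvg hL2 n).aestronglyMeasurable) htop] with ω hω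
  refine ⟨∑' n, levelAvg d Y n ω, (tendsto_add_atTop_iff_nat 1).1 ?_⟩
  simp only [sphAvg_succ_eq_sum_levelAvg (by omega : 0 < d)]
  exact (tendsto_add_atTop_iff_nat 1).2 hω.of_norm.hasSum.tendsto_sum_nat

theorem measurable_sphAvg (hmeas : ∀ v, Measurable (Y v)) (n : ℕ) : Measurable (sphAvg d Y n) :=
  (Finset.measurable_fun_sum _ fun _ _ =>
    Finset.measurable_fun_sum _ fun _ _ => hmeas _).const_mul _

theorem charFun_map_eq_integral_exp {X : Ω → ℝ} (hX : AEMeasurable X P) (t : ℝ) :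
    charFun (P.map X) t = ∫ ω, Complex.exp (Complex.I * t * (X ω : ℝ)) ∂P := by
  rw [charFun_apply_real, integral_map hX (by fun_prop)]
  congr with ω
  ring_nf

theorem norm_charFun_sphAvg_le [IsProbabilityMeasure P] (hd : 0 < d)
    (hmeas : ∀ v, Measurable (Y v)) (hindep : iIndepFun Y P) {ψ : ℝ → ℝ}
    (hψ : ∀ v, ∀ s : ℝ, ‖∫ ω, Complex.exp (Complex.I * s * (Y v ω : ℝ)) ∂P‖ ≤ ψ s)
    {K n : ℕ} (hKn : K ≤ n) (t : ℝ) :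
    ‖∫ ω, Complex.exp (Complex.I * t * (sphAvg d Y (n + 1) ω : ℝ)) ∂P‖ ≤
      ψ ((levelCard d K)⁻¹ * t) ^ (sphereW d (K + 1)).card := by
  set s := (range (n + 1)).biUnion (fun k => sphereW d (k + 1)) with hs
  let X : Vertex d → Ω → ℝ := fun v ω => (levelCard d v.2.length)⁻¹ * Y v ω
  have hX (v : Vertex d) : Measurable (X v) := (hmeas v).const_mul _
  have hXi : iIndepFun X P :=
    hindep.comp (fun v y => (levelCard d v.2.length)⁻¹ * y) fun v => measurable_const_mul _
  have hsphAvg : sphAvg d Y (n + 1) = fun ω => ∑ v ∈ s, X v ω :=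
    funext fun ω => sphAvg_succ_eq_sum_biUnion hd Y n ω
  have hsub : sphereW d (K + 1) ⊆ s :=
    subset_biUnion_of_mem (fun k => sphereW d (k + 1)) (mem_range.2 (by omega))
  have hprob (v : Vertex d) : IsProbabilityMeasure (P.map (X v)) :=
    Measure.isProbabilityMeasure_map (hX v).aemeasurable
  rw [← charFun_map_eq_integral_exp (measurable_sphAvg hmeas _).aemeasurable, hsphAvg,
    iIndepFun.charFun_map_fun_finsetSum_eq_prod (fun v _ => (hX v).aemeasurable) (hXi.restrict s),
    Finset.prod_apply, norm_prod]
  calc ∏ v ∈ s, ‖charFun (P.map (X v)) t‖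
      ≤ ∏ v ∈ sphereW d (K + 1), ‖charFun (P.map (X v)) t‖ := by
        rw [← prod_sdiff hsub]
        exact mul_le_of_le_one_left (prod_nonneg fun _ _ => norm_nonneg _)
          (prod_le_one (fun _ _ => norm_nonneg _) fun v _ => norm_charFun_le_one t)
    _ ≤ ∏ _v ∈ sphereW d (K + 1), ψ ((levelCard d K)⁻¹ * t) := by
        refine prod_le_prod (fun _ _ => norm_nonneg _) fun v hv => ?_
        rw [charFun_map_eq_integral_exp (hX v).aemeasurable]
        refine le_trans (le_of_eq ?_) (hψ v _)
        simp only [X, length_of_mem_sphereW hv]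
        congr with ω
        push_cast
        ring_nf
    _ = _ := prod_const _

theorem norm_integral_exp_limit_le [IsProbabilityMeasure P] (hd : 0 < d)
    (hmeas : ∀ v, Measurable (Y v)) (hindep : iIndepFun Y P) {ψ : ℝ → ℝ}
    (hψ0 : ∀ s, 0 ≤ ψ s)
    (hψ : ∀ v, ∀ s : ℝ, ‖∫ ω, Complex.exp (Complex.I * s * (Y v ω : ℝ)) ∂P‖ ≤ ψ s)
    {cbar δ : ℝ} (hψgauss : ∀ s : ℝ, |s| ≤ δ → ψ s ≤ Real.exp (-cbar * s ^ 2))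
    {H : Ω → ℝ} (hH : ∀ᵐ ω ∂P, Tendsto (fun r => sphAvg d Y r ω) atTop (𝓝 (H ω)))
    (K : ℕ) (t : ℝ) (ht : |t| ≤ δ * levelCard d K) :
    ‖∫ ω, Complex.exp (Complex.I * t * (H ω : ℝ)) ∂P‖ ≤
      Real.exp (-(cbar * t ^ 2 / levelCard d K)) := by
  have hpos := levelCard_pos hd K
  have hlim : Tendsto (fun n => ∫ ω, Complex.exp (Complex.I * t * (sphAvg d Y (n + 1) ω : ℝ)) ∂P)
      atTop (𝓝 (∫ ω, Complex.exp (Complex.I * t * (H ω : ℝ)) ∂P)) := by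
    refine tendsto_integral_of_dominated_convergence (fun _ => 1) (fun n => ?_)
      (integrable_const 1) (fun n => ae_of_all _ fun ω => ?_) ?_
    · exact (Complex.continuous_exp.measurable.comp
        ((Complex.measurable_ofReal.comp (measurable_sphAvg hmeas (n + 1))).const_mul _)).aestronglyMeasurable
    · rw [show Complex.I * t * (sphAvg d Y (n + 1) ω : ℝ) =
        ((t * sphAvg d Y (n + 1) ω : ℝ) : ℂ) * Complex.I by push_cast; ring,
        Complex.norm_exp_ofReal_mul_I]
    · filter_upwards [hH] with ω hω
      have hc : Continuous fun x : ℝ => Complex.exp (Complex.I * t * (x : ℝ)) := by fun_prop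
      exact (hc.tendsto _).comp ((tendsto_add_atTop_iff_nat 1).2 hω)
  refine le_of_tendsto hlim.norm ?_
  filter_upwards [eventually_ge_atTop K] with n hn
  refine (norm_charFun_sphAvg_le hd hmeas hindep hψ hn t).trans ?_
  have hle : |(levelCard d K)⁻¹ * t| ≤ δ := by
    rw [abs_mul, abs_of_pos (inv_pos.2 hpos), inv_mul_le_iff₀ hpos, mul_comm]
    exact ht
  refine (pow_le_pow_left₀ (hψ0 _) (hψgauss _ hle) _).trans_eq ?_
  rw [← Real.exp_nat_mul, card_sphereW_eq_levelCard]
  congr 1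
  field_simp

end Probability

theorem exists_level_exponent_le {d : ℕ} (hd : 2 ≤ d) {cbar δ : ℝ} (hcbar : 0 < cbar) (hδ : 0 < δ)
    (t : ℝ) : ∃ K : ℕ, |t| ≤ δ * levelCard d K ∧
      min (cbar / (((d : ℝ) + 1) * ((d : ℝ) - 1))) (cbar * δ / ((d : ℝ) * ((d : ℝ) - 1)))
        * min (t ^ 2) |t| ≤ cbar * t ^ 2 / levelCard d K := by
  have hd' : (2 : ℝ) ≤ d := by exact_mod_cast hd
  have hd1 : (1 : ℝ) ≤ (d : ℝ) - 1 := by linarith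
  have hm0 : 0 ≤ min (t ^ 2) |t| := le_min (sq_nonneg t) (abs_nonneg t)
  have hex : ∃ K : ℕ, |t| ≤ δ * levelCard d K := by
    obtain ⟨K, hK⟩ := pow_unbounded_of_one_lt (|t| / δ) (by linarith : (1 : ℝ) < d)
    refine ⟨K, ?_⟩
    rw [div_lt_iff₀ hδ] at hK
    have : (0 : ℝ) < (d : ℝ) ^ K := by positivity
    unfold levelCard
    nlinarith [mul_pos (mul_pos hδ this) (by linarith : (0 : ℝ) < d)]
  classical
  refine ⟨Nat.find hex, Nat.find_spec hex, ?_⟩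
  rcases hK : Nat.find hex with _ | K
  · calc _ ≤ cbar / (((d : ℝ) + 1) * ((d : ℝ) - 1)) * t ^ 2 := by
          gcongr
          · exact min_le_left _ _
          · exact min_le_left _ _
      _ ≤ cbar / (((d : ℝ) + 1) * 1) * t ^ 2 := by gcongr
      _ = _ := by
          simp only [levelCard, pow_zero]
          ring
  · have hlt : δ * levelCard d K < |t| := by
      simpa using Nat.find_min hex (m := K) (by omega)
    have hpos := levelCard_pos (by omega : 0 < d) K
    have htpos : 0 < |t| := lt_trans (by positivity) hlt
    rw [levelCard_succ]
    calc _ ≤ cbar * δ / ((d : ℝ) * ((d : ℝ) - 1)) * |t| := by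
          gcongr
          · exact min_le_right _ _
          · exact min_le_right _ _
      _ ≤ cbar * δ / ((d : ℝ) * 1) * |t| := by gcongr
      _ ≤ _ := by
          rw [← sq_abs t, mul_one, div_mul_eq_mul_div,
            div_le_div_iff₀ (by positivity) (by positivity)]
          have : cbar * |t| * d * (δ * levelCard d K) ≤ cbar * |t| * d * |t| := by gcongr
          linarith

/-- Independent centered increments with uniformly bounded second moments
and a uniform characteristic-function bound `ψ⋆ ≤ exp(-c̄s²)` near `0`: the a.s. limit `H` of
the spherical averages exists, its characteristic function satisfies
`|E[e^{itH}]| ≤ exp(-c·min(t²,|t|))` with the explicit `c > 0` below, and consequently the law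
of `H` has a bounded `C^∞` Lebesgue density. -/
theorem independent_increments_smooth_density
    {Ω : Type} [MeasurableSpace Ω] (P : Measure Ω) [IsProbabilityMeasure P]
    (d : ℕ) (hd : 2 ≤ d)
    (Y : Vertex d → Ω → ℝ) (hmeas : ∀ v, Measurable (Y v))
    (hindep : iIndepFun Y P)
    (hL2 : ∀ v, MemLp (Y v) 2 P)
    (hmean : ∀ v, ∫ ω, Y v ω ∂P = 0)
    (C : ℝ) (hC : 0 ≤ C) (hvar : ∀ v, ∫ ω, (Y v ω) ^ 2 ∂P ≤ C)
    (ψstar : ℝ → ℝ) (hψ01 : ∀ s, 0 ≤ ψstar s ∧ ψstar s ≤ 1)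
    (hψ : ∀ v, ∀ s : ℝ,
      ‖∫ ω, Complex.exp (Complex.I * s * (Y v ω : ℝ)) ∂P‖ ≤ ψstar s)
    (cbar δ : ℝ) (hcbar : 0 < cbar) (hδ : 0 < δ)
    (hψgauss : ∀ s : ℝ, |s| ≤ δ → ψstar s ≤ Real.exp (-cbar * s ^ 2)) :
    ∃ H : Ω → ℝ,
      (∀ᵐ ω ∂P, Tendsto (fun r => sphAvg d Y r ω) atTop (𝓝 (H ω))) ∧
      (0 < min (cbar / (((d : ℝ) + 1) * ((d : ℝ) - 1))) (cbar * δ / ((d : ℝ) * ((d : ℝ) - 1)))) ∧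
      (∀ t : ℝ,
        ‖∫ ω, Complex.exp (Complex.I * t * (H ω : ℝ)) ∂P‖ ≤
          Real.exp (-(min (cbar / (((d : ℝ) + 1) * ((d : ℝ) - 1)))
              (cbar * δ / ((d : ℝ) * ((d : ℝ) - 1)))) * min (t ^ 2) |t|)) ∧
      ∃ f : ℝ → ℝ,
        ContDiff ℝ (⊤ : ℕ∞) f ∧
        (∃ M : ℝ, ∀ x, |f x| ≤ M) ∧
        Measure.map H P = volume.withDensity (fun x => ENNReal.ofReal (f x)) := by
  have hd' : (2 : ℝ) ≤ d := by exact_mod_cast hd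
  have hd0 : 0 < d := by omega
  have hlim := exists_tendsto_sphAvg hd hindep hL2 hmean hC hvar
  obtain ⟨H, hHm, hH⟩ :=
    measurable_limit_of_tendsto_metrizable_ae
      (fun n => (measurable_sphAvg hmeas n).aemeasurable) hlim
  set c := min (cbar / (((d : ℝ) + 1) * ((d : ℝ) - 1))) (cbar * δ / ((d : ℝ) * ((d : ℝ) - 1)))
  have hc : 0 < c := by
    have : 0 < (d : ℝ) - 1 := by linarith
    exact lt_min (by positivity) (by positivity)
  have hbound (t : ℝ) : ‖∫ ω, Complex.exp (Complex.I * t * (H ω : ℝ)) ∂P‖ ≤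
      Real.exp (-c * min (t ^ 2) |t|) := by
    obtain ⟨K, hK, hKc⟩ := exists_level_exponent_le hd hcbar hδ t
    refine (norm_integral_exp_limit_le hd0 hmeas hindep (fun s => (hψ01 s).1) hψ hψgauss hH
      K t hK).trans (Real.exp_le_exp.2 ?_)
    rw [neg_mul]
    exact neg_le_neg hKc
  refine ⟨H, hH, hc, hbound, ?_⟩
  have : IsProbabilityMeasure (P.map H) := Measure.isProbabilityMeasure_map hHm.aemeasurable
  refine exists_contDiff_density_of_integrable_charFun (P.map H) fun n => ?_
  refine ((integrable_abs_pow_mul_exp_neg_mul_abs n hc).const_mul (Real.exp c)).mono'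
    (by fun_prop) (ae_of_all _ fun t => ?_)
  rw [Real.norm_of_nonneg (by positivity), mul_left_comm, ← Real.exp_add,
    charFun_map_eq_integral_exp hHm.aemeasurable]
  gcongr
  refine (hbound t).trans (Real.exp_le_exp.2 ?_)
  have hmin : |t| - 1 ≤ min (t ^ 2) |t| :=
    le_min (by nlinarith [sq_abs t, sq_nonneg (|t| - 1), abs_nonneg t]) (by linarith)
  nlinarith [mul_le_mul_of_nonneg_left hmin hc.le]
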